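/- ARC preserves robustness: if F is (f,κ)-robust, then F∘ARC is (f, κ + 2f/(n−2f))-robust, where ARC clips the ⌊2(f/n)(n−f)⌋ largest-norm inputs to the norm of the (⌊2(f/n)(n−f)⌋+1)-th largest input. -/

import Mathlib

/-!
Write `yᵢ = clip_C(xᵢ)`, `eᵢ = xᵢ - yᵢ`, and let `V`, `V'` be the variances over `S` of the `xᵢ` and
of the `yᵢ`. The heart of the proof is

  `‖x̄ - ȳ‖² ≤ r (V - V')`, where `r = 2f / (n - 2f)`.

Since `clip_C` is the metric projection onto the ball of radius `C`, which contains `ȳ`, each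
`⟪yᵢ - ȳ, eᵢ⟫` is nonnegative (`inner_sub_clip_nonneg`). Expanding
`xᵢ - x̄ = (yᵢ - ȳ) + (eᵢ - ē)` therefore gives `|S| (V - V') ≥ ∑ ‖eᵢ‖² - |S| ‖ē‖²`
(`variance_add_ge`). At most `k ≤ 2f|S|/n` of the `eᵢ` are nonzero, so Cauchy–Schwarz yields
`n |S| ‖ē‖² ≤ 2f ∑ ‖eᵢ‖²`, and the displayed bound follows (`variance_drop`).

Robustness of `F` at `y` gives `‖F y - ȳ‖² ≤ κ V'`, and then
`(‖F y - ȳ‖ + ‖ȳ - x̄‖)² ≤ (√(κ V') + √(r (V - V')))² ≤ (κ + r) V` by Cauchy–Schwarz in the plane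
(`sq_add_le_of_split`). If `κ < 0`, robustness of `F` at `x` itself, which gives `0 ≤ κ V`, forces
`V = 0`.
-/

noncomputable def clip {d : ℕ} (C : ℝ) (x : EuclideanSpace ℝ (Fin d)) :
    EuclideanSpace ℝ (Fin d) :=
  (min 1 (C / ‖x‖)) • x

/-- `(f, κ)`-robustness of an aggregation rule `F`. -/
def Robust {d : ℕ} (n f : ℕ) (κ : ℝ)
    (F : (Fin n → EuclideanSpace ℝ (Fin d)) → EuclideanSpace ℝ (Fin d)) : Prop :=
  ∀ x : Fin n → EuclideanSpace ℝ (Fin d), ∀ S : Finset (Fin n), S.card = n - f →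
    ‖F x - (S.card : ℝ)⁻¹ • ∑ i ∈ S, x i‖ ^ 2
      ≤ κ / (S.card : ℝ) * ∑ i ∈ S, ‖x i - (S.card : ℝ)⁻¹ • ∑ j ∈ S, x j‖ ^ 2

open scoped RealInnerProductSpace

theorem norm_clip_le {d : ℕ} {C : ℝ} (hC : 0 ≤ C) (x : EuclideanSpace ℝ (Fin d)) :
    ‖clip C x‖ ≤ C := by
  unfold clip
  have h0 : 0 ≤ min 1 (C / ‖x‖) := le_min zero_le_one (by positivity)
  rw [norm_smul, Real.norm_of_nonneg h0]
  by_cases hx : ‖x‖ = 0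
  · simp [hx, hC]
  · calc min 1 (C / ‖x‖) * ‖x‖ ≤ C / ‖x‖ * ‖x‖ := by gcongr; exact min_le_right _ _
      _ = C := by field_simp

theorem clip_eq_self {d : ℕ} {C : ℝ} {x : EuclideanSpace ℝ (Fin d)} (h : ‖x‖ ≤ C) :
    clip C x = x := by
  unfold clip
  by_cases hx : x = 0
  · simp [hx]
  · have : 0 < ‖x‖ := norm_pos_iff.2 hx
    rw [min_eq_left ((one_le_div this).2 h), one_smul]

/-- The variational inequality of the projection onto the ball of radius `C`. -/
theorem inner_sub_clip_nonneg {d : ℕ} {C : ℝ} (hC : 0 ≤ C) (x z : EuclideanSpace ℝ (Fin d))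
    (hz : ‖z‖ ≤ C) : 0 ≤ ⟪clip C x - z, x - clip C x⟫ := by
  by_cases h : ‖x‖ ≤ C
  · simp [clip_eq_self h]
  push Not at h
  have hx : 0 < ‖x‖ := hC.trans_lt h
  have ht1 : C / ‖x‖ ≤ 1 := (div_le_one hx).2 h.le
  have hc : clip C x = (C / ‖x‖) • x := by unfold clip; rw [min_eq_right ht1]
  have he : x - clip C x = (1 - C / ‖x‖) • x := by rw [hc, sub_smul, one_smul]
  rw [he, inner_smul_right, inner_sub_left, hc, real_inner_smul_left, real_inner_self_eq_norm_sq]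
  have h1 : ⟪z, x⟫ ≤ C * ‖x‖ := (real_inner_le_norm z x).trans (by gcongr)
  have h2 : C / ‖x‖ * ‖x‖ ^ 2 = C * ‖x‖ := by field_simp
  rw [h2]
  exact mul_nonneg (by linarith) (by linarith)

theorem sum_sub_mean_eq_zero {ι E : Type*} [NormedAddCommGroup E] [InnerProductSpace ℝ E]
    {S : Finset ι} (hS : 0 < S.card) (a : ι → E) :
    ∑ i ∈ S, (a i - (S.card : ℝ)⁻¹ • ∑ j ∈ S, a j) = 0 := by
  have : (S.card : ℝ) ≠ 0 := by positivity
  rw [Finset.sum_sub_distrib, Finset.sum_const, ← Nat.cast_smul_eq_nsmul ℝ, smul_inv_smul₀ this,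
    sub_self]

theorem sum_norm_sub_mean_sq {ι E : Type*} [NormedAddCommGroup E] [InnerProductSpace ℝ E]
    {S : Finset ι} (hS : 0 < S.card) (a : ι → E) :
    ∑ i ∈ S, ‖a i - (S.card : ℝ)⁻¹ • ∑ j ∈ S, a j‖ ^ 2
      = ∑ i ∈ S, ‖a i‖ ^ 2 - S.card * ‖(S.card : ℝ)⁻¹ • ∑ j ∈ S, a j‖ ^ 2 := by
  have h0 := sum_sub_mean_eq_zero hS a
  set m := (S.card : ℝ)⁻¹ • ∑ j ∈ S, a j
  have h1 : ∀ i ∈ S, ‖a i‖ ^ 2 = ‖a i - m‖ ^ 2 + 2 * ⟪a i - m, m⟫ + ‖m‖ ^ 2 := fun i _ => by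
    rw [← norm_add_sq_real, sub_add_cancel]
  rw [Finset.sum_congr rfl h1, Finset.sum_add_distrib, Finset.sum_add_distrib, ← Finset.mul_sum,
    ← sum_inner, h0, inner_zero_left, Finset.sum_const, nsmul_eq_mul]
  ring

/-- If every displacement `eᵢ` points away from the mean of the `yᵢ`, then adding `e` to `y`
increases the (unnormalized) variance by at least that of `e`. -/
theorem variance_add_ge {ι E : Type*} [NormedAddCommGroup E] [InnerProductSpace ℝ E]
    {S : Finset ι} (hS : 0 < S.card) (y e : ι → E)
    (h : ∀ i ∈ S, 0 ≤ ⟪y i - (S.card : ℝ)⁻¹ • ∑ j ∈ S, y j, e i⟫) :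
    ∑ i ∈ S, ‖y i - (S.card : ℝ)⁻¹ • ∑ j ∈ S, y j‖ ^ 2
        + ∑ i ∈ S, ‖e i - (S.card : ℝ)⁻¹ • ∑ j ∈ S, e j‖ ^ 2
      ≤ ∑ i ∈ S, ‖(y i + e i) - (S.card : ℝ)⁻¹ • ∑ j ∈ S, (y j + e j)‖ ^ 2 := by
  have h0 := sum_sub_mean_eq_zero hS y
  rw [Finset.sum_add_distrib, smul_add]
  set m := (S.card : ℝ)⁻¹ • ∑ j ∈ S, y j
  set q := (S.card : ℝ)⁻¹ • ∑ j ∈ S, e j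
  have h1 : ∀ i ∈ S, ‖y i + e i - (m + q)‖ ^ 2
      = ‖y i - m‖ ^ 2 + 2 * (⟪y i - m, e i⟫ - ⟪y i - m, q⟫) + ‖e i - q‖ ^ 2 := fun i _ => by
    rw [← inner_sub_right, ← norm_add_sq_real]; congr 2; abel
  rw [Finset.sum_congr rfl h1, Finset.sum_add_distrib, Finset.sum_add_distrib, ← Finset.mul_sum,
    Finset.sum_sub_distrib, ← sum_inner S _ q, h0, inner_zero_left]
  have := Finset.sum_nonneg h
  linarith

/-- Cauchy–Schwarz for a family of vectors with at most `k` nonzero members. -/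
theorem norm_sum_sq_le_of_support {ι E : Type*} [NormedAddCommGroup E]
    (S T : Finset ι) (e : ι → E) (k : ℝ) (hT : (T.card : ℝ) ≤ k)
    (h : ∀ i ∈ S, i ∉ T → e i = 0) : ‖∑ i ∈ S, e i‖ ^ 2 ≤ k * ∑ i ∈ S, ‖e i‖ ^ 2 := by
  classical
  have h1 : ∑ i ∈ S, e i = ∑ i ∈ S ∩ T, e i := by
    refine (Finset.sum_subset Finset.inter_subset_left fun i hi hn => h i hi fun hT => ?_).symm
    exact hn (Finset.mem_inter.2 ⟨hi, hT⟩)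
  have hc : ((S ∩ T).card : ℝ) ≤ k :=
    le_trans (by exact_mod_cast Finset.card_le_card Finset.inter_subset_right) hT
  calc ‖∑ i ∈ S, e i‖ ^ 2 ≤ (∑ i ∈ S ∩ T, ‖e i‖) ^ 2 := by
        rw [h1]; gcongr; exact norm_sum_le _ _
    _ ≤ (S ∩ T).card * ∑ i ∈ S ∩ T, ‖e i‖ ^ 2 := sq_sum_le_card_mul_sum_sq
    _ ≤ k * ∑ i ∈ S, ‖e i‖ ^ 2 := by
        have hsub : ∑ i ∈ S ∩ T, ‖e i‖ ^ 2 ≤ ∑ i ∈ S, ‖e i‖ ^ 2 :=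
          Finset.sum_le_sum_of_subset_of_nonneg Finset.inter_subset_left
            fun _ _ _ => sq_nonneg _
        have : (0 : ℝ) ≤ ∑ i ∈ S ∩ T, ‖e i‖ ^ 2 := Finset.sum_nonneg fun _ _ => sq_nonneg _
        have : (0 : ℝ) ≤ (S ∩ T).card := Nat.cast_nonneg _
        exact mul_le_mul hc hsub (by assumption) (by linarith)

/-- The scalar core of the variance comparison. Here `s = |S|`, `B = ‖x̄ - ȳ‖`, `Q = ∑ ‖eᵢ‖²`, and
`W`, `W'` are the unnormalized variances before and after clipping. -/
theorem variance_drop {n f s k B Q W W' : ℝ} (hs : 0 < s) (hf : 0 ≤ f) (hnf : 2 * f < n)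
    (hQ : 0 ≤ Q) (hk : n * k ≤ 2 * f * s) (hCS : s ^ 2 * B ^ 2 ≤ k * Q)
    (hvar : W' + (Q - s * B ^ 2) ≤ W) :
    W' ≤ W ∧ B ^ 2 ≤ 2 * f / (n - 2 * f) * (W / s - W' / s) := by
  have hn : 0 < n := by linarith
  have hkey : n * (s * B ^ 2) ≤ 2 * f * Q := by
    have h1 : s * (n * (s * B ^ 2)) ≤ s * (2 * f * Q) := by
      calc s * (n * (s * B ^ 2)) = n * (s ^ 2 * B ^ 2) := by ring
        _ ≤ n * (k * Q) := mul_le_mul_of_nonneg_left hCS hn.le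
        _ = (n * k) * Q := by ring
        _ ≤ (2 * f * s) * Q := mul_le_mul_of_nonneg_right hk hQ
        _ = s * (2 * f * Q) := by ring
    exact le_of_mul_le_mul_left h1 hs
  constructor
  · have : n * (s * B ^ 2) ≤ n * Q := hkey.trans (mul_le_mul_of_nonneg_right hnf.le hQ)
    have := le_of_mul_le_mul_left this hn
    linarith
  · have hpos : 0 < n - 2 * f := by linarith
    rw [← sub_div, div_mul_div_comm, le_div_iff₀ (by positivity)]
    nlinarith [mul_le_mul_of_nonneg_left hvar (by positivity : 0 ≤ 2 * f)]

/-- Cauchy–Schwarz in the plane, for the vectors `(√κ, √r)` and `(√V', √(V - V'))`. The hypothesis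
`0 ≤ κ * V` also admits `κ < 0`, where it leaves only `V = V' = 0`. -/
theorem sq_add_le_of_split {A B κ r V V' : ℝ} (hκ : 0 ≤ κ * V) (hr : 0 ≤ r)
    (hV' : 0 ≤ V') (hVV : V' ≤ V) (hA : A ^ 2 ≤ κ * V') (hB : B ^ 2 ≤ r * (V - V')) :
    (A + B) ^ 2 ≤ (κ + r) * V := by
  rcases le_or_gt 0 κ with h | h
  · have h1 : (2 * (A * B)) ^ 2 ≤ (κ * (V - V') + r * V') ^ 2 := by
      have : A ^ 2 * B ^ 2 ≤ (κ * V') * (r * (V - V')) :=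
        mul_le_mul hA hB (sq_nonneg _) (by positivity)
      nlinarith [sq_nonneg (κ * (V - V') - r * V')]
    have h2 : 0 ≤ κ * (V - V') + r * V' :=
      add_nonneg (mul_nonneg h (by linarith)) (mul_nonneg hr hV')
    have h3 := abs_le_of_sq_le_sq h1 h2
    nlinarith [(le_abs_self (2 * (A * B))).trans h3]
  · have hV : V = 0 := by nlinarith
    obtain rfl : V' = 0 := by linarith
    subst hV
    have hA0 : A = 0 := by nlinarith [sq_nonneg A]
    have hB0 : B = 0 := by nlinarith [sq_nonneg B]
    simp [hA0, hB0]

/-- ARC preserves robustness: the clipping threshold is the norm of the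
`(k+1)`-th largest input, where `k = ⌊2(f/n)(n-f)⌋` (note `k < n`, so the index
`⟨k % n, _⟩` is just `k` in `Fin n`). -/
theorem arc_preserves_robustness {d n f : ℕ} (hnf : 2 * f < n) (κ : ℝ)
    (F : (Fin n → EuclideanSpace ℝ (Fin d)) → EuclideanSpace ℝ (Fin d))
    (hF : Robust n f κ F)
    (x : Fin n → EuclideanSpace ℝ (Fin d)) (π : Equiv.Perm (Fin n))
    (hsort : ∀ i j : Fin n, i ≤ j → ‖x (π j)‖ ≤ ‖x (π i)‖)
    (S : Finset (Fin n)) (hS : S.card = n - f) :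
    ‖F (fun i =>
          clip (‖x (π ⟨(Nat.floor ((2 * (f : ℚ) / n) * ((n : ℚ) - f))) % n,
                  Nat.mod_lt _ (by omega)⟩)‖) (x i))
        - (S.card : ℝ)⁻¹ • ∑ i ∈ S, x i‖ ^ 2
      ≤ (κ + 2 * (f : ℝ) / ((n : ℝ) - 2 * f)) / (S.card : ℝ)
          * ∑ i ∈ S, ‖x i - (S.card : ℝ)⁻¹ • ∑ j ∈ S, x j‖ ^ 2 := by
  classical
  set k : Fin n := ⟨(Nat.floor ((2 * (f : ℚ) / n) * ((n : ℚ) - f))) % n, Nat.mod_lt _ (by omega)⟩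
    with hk
  set C := ‖x (π k)‖ with hCdef
  have hC : 0 ≤ C := norm_nonneg _
  have hs : 0 < S.card := by omega
  have hs' : (0 : ℝ) < S.card := by exact_mod_cast hs
  have hn : (0 : ℝ) < n := by exact_mod_cast (by omega : 0 < n)
  have hnf' : (2 * f : ℝ) < n := by exact_mod_cast hnf
  have hf : (0 : ℝ) ≤ f := Nat.cast_nonneg _
  have hsc : (S.card : ℝ) = n - f := by rw [hS, Nat.cast_sub (by omega)]
  -- Reducing modulo `n` can only decrease the floor, so this bound does not need `k < n`.
  have hkb : (n : ℝ) * (k : ℕ) ≤ 2 * f * S.card := by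
    have h1 : ((k : ℕ) : ℚ) ≤ (2 * (f : ℚ) / n) * ((n : ℚ) - f) := by
      have hfn : (f : ℚ) ≤ n := by exact_mod_cast (by omega : f ≤ n)
      refine le_trans ?_ (Nat.floor_le (mul_nonneg (by positivity) (by linarith)))
      exact Nat.cast_le.2 (Nat.mod_le _ _)
    have h2 : (n : ℚ) * (k : ℕ) ≤ 2 * f * (n - f) := by
      have hn : (0 : ℚ) < n := by exact_mod_cast (by omega : 0 < n)
      calc (n : ℚ) * (k : ℕ) ≤ n * ((2 * (f : ℚ) / n) * ((n : ℚ) - f)) := by gcongr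
        _ = 2 * f * (n - f) := by field_simp
    rw [hsc]
    exact_mod_cast h2
  set y : Fin n → EuclideanSpace ℝ (Fin d) := fun i => clip C (x i) with hy
  set e : Fin n → EuclideanSpace ℝ (Fin d) := fun i => x i - y i with he
  -- Only the `k` inputs sorted strictly before the threshold can be moved by the clipping.
  have hsupp : ∀ i ∈ S, i ∉ (Finset.Iio k).map π.toEmbedding → e i = 0 := by
    intro i _ hi
    have hle : k ≤ π.symm i := by
      by_contra! hlt
      exact hi (Finset.mem_map.2 ⟨π.symm i, Finset.mem_Iio.2 hlt, by simp⟩)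
    have := hsort _ _ hle
    rw [Equiv.apply_symm_apply] at this
    simp only [he, hy]
    rw [clip_eq_self this, sub_self]
  have hCS := norm_sum_sq_le_of_support S _ e (k : ℕ) (by simp) hsupp
  have hmean : ‖(S.card : ℝ)⁻¹ • ∑ i ∈ S, y i‖ ≤ C := by
    rw [norm_smul, norm_inv, Real.norm_of_nonneg hs'.le, inv_mul_le_iff₀ hs']
    calc ‖∑ i ∈ S, y i‖ ≤ ∑ _i ∈ S, C := norm_sum_le_of_le _ fun i _ => norm_clip_le hC _
      _ = S.card * C := by simp
  have hvar := variance_add_ge hs y e fun i _ => inner_sub_clip_nonneg hC (x i) _ hmean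
  have hye : ∀ i, y i + e i = x i := fun i => by simp [he]
  simp only [hye] at hvar
  rw [sum_norm_sub_mean_sq hs e] at hvar
  have hb : (S.card : ℝ)⁻¹ • ∑ j ∈ S, e j
      = (S.card : ℝ)⁻¹ • ∑ j ∈ S, x j - (S.card : ℝ)⁻¹ • ∑ j ∈ S, y j := by
    rw [← smul_sub, ← Finset.sum_sub_distrib]
  have hbs : ‖∑ i ∈ S, e i‖ ^ 2 = (S.card : ℝ) ^ 2 * ‖(S.card : ℝ)⁻¹ • ∑ j ∈ S, e j‖ ^ 2 := by
    rw [norm_smul, norm_inv, Real.norm_of_nonneg hs'.le]; field_simp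
  rw [hbs] at hCS
  have hFx := hF x S hS
  have hFy := hF y S hS
  set mx := (S.card : ℝ)⁻¹ • ∑ j ∈ S, x j
  set my := (S.card : ℝ)⁻¹ • ∑ j ∈ S, y j
  set W := ∑ i ∈ S, ‖x i - mx‖ ^ 2
  set W' := ∑ i ∈ S, ‖y i - my‖ ^ 2
  have hW' : 0 ≤ W' := Finset.sum_nonneg fun _ _ => sq_nonneg _
  rw [hb] at hCS hvar
  set B := ‖mx - my‖ with hB
  set Q := ∑ i ∈ S, ‖e i‖ ^ 2
  have hQ : 0 ≤ Q := Finset.sum_nonneg fun _ _ => sq_nonneg _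
  obtain ⟨hWW, hBr⟩ := variance_drop hs' hf hnf' hQ hkb hCS hvar
  have hr : 0 ≤ 2 * (f : ℝ) / ((n : ℝ) - 2 * f) := div_nonneg (by positivity) (by linarith)
  have htri : ‖F y - mx‖ ≤ ‖F y - my‖ + B := by
    rw [hB, norm_sub_rev mx my]; exact norm_sub_le_norm_sub_add_norm_sub _ _ _
  have hsq : ‖F y - mx‖ ^ 2 ≤ (‖F y - my‖ + B) ^ 2 := pow_le_pow_left₀ (norm_nonneg _) htri 2
  rw [div_mul_eq_mul_div, mul_div_assoc] at hFx hFy ⊢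
  have hV' : 0 ≤ W' / S.card := div_nonneg hW' hs'.le
  have hVV : W' / S.card ≤ W / S.card := div_le_div_of_nonneg_right hWW hs'.le
  exact hsq.trans (sq_add_le_of_split ((sq_nonneg _).trans hFx) hr hV' hVV hFy hBr)
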